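/- arXiv:math/0310308 — 5 statements merged into one kernel-verified Lean document; each statement's English description precedes it below -/
import Mathlib

section
/- For α > 0 and u ∈ ℝ, the curve γ(θ) = (cos θ, sin θ, u e^{−αθ}) lies in M = ℝ³ ∖ {(0,0,z) : z ∈ ℝ} and satisfies the lifted ODE γ'(θ) = −sin θ · ζ_X^α(γ(θ)) + cos θ · ζ_Y^α(γ(θ)) for all θ ∈ ℝ. -/
noncomputable section

/-!
STATEMENT 10: for `α > 0` and `u ∈ ℝ`, the curve `γ(θ) = (cos θ, sin θ, u e^{−αθ})` lies in
`M = ℝ³ ∖ {z-axis}` and satisfies `γ'(θ) = −sin θ · ζ_X^α(γ(θ)) + cos θ · ζ_Y^α(γ(θ))`.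
-/

/-- `ℝ³` minus the `z`-axis. -/
def exSixM : Set (ℝ × ℝ × ℝ) := {p | (p.1, p.2.1) ≠ (0, 0)}

/-- The vector field `ζ_X^α(x,y,z) = (1, 0, α y z/(x²+y²))`. -/
def zetaX (α : ℝ) : ℝ × ℝ × ℝ → ℝ × ℝ × ℝ :=
  fun p => (1, 0, α * p.2.1 * p.2.2 / (p.1 ^ 2 + p.2.1 ^ 2))

/-- The vector field `ζ_Y^α(x,y,z) = (0, 1, −α x z/(x²+y²))`. -/
def zetaY (α : ℝ) : ℝ × ℝ × ℝ → ℝ × ℝ × ℝ :=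
  fun p => (0, 1, -(α * p.1 * p.2.2 / (p.1 ^ 2 + p.2.1 ^ 2)))

/-!
On `exSixM` the plane field spanned by `ζ_X^α` and `ζ_Y^α` is the kernel of `dz + α z dθ`, where
`θ` is the polar angle of `(x, y)`. Along a lift `z` thus solves `z' = -α z θ'`, so that
`z = u e^{-αθ}`. The helicoidal curve is the case of radius `1` and angle `θ`.
-/

open Real

/-- The value at the point `p` and tangent vector `v` of the closed 1-form
`dθ = (x dy - y dx) / (x² + y²)` on the punctured plane. By division by zero it is `0` at the
origin. -/
def angularForm (p v : ℝ × ℝ) : ℝ :=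
  (p.1 * v.2 - p.2 * v.1) / (p.1 ^ 2 + p.2 ^ 2)

theorem angularForm_polar {r : ℝ} (hr : r ≠ 0) (φ r' φ' : ℝ) :
    angularForm (r * cos φ, r * sin φ)
      (r' * cos φ - r * φ' * sin φ, r' * sin φ + r * φ' * cos φ) = φ' := by
  have norm_sq : (r * cos φ) ^ 2 + (r * sin φ) ^ 2 = r ^ 2 := by
    linear_combination r ^ 2 * cos_sq_add_sin_sq φ
  rw [angularForm, norm_sq, div_eq_iff (pow_ne_zero 2 hr)]
  linear_combination r ^ 2 * φ' * cos_sq_add_sin_sq φ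

theorem smul_zetaX_add_smul_zetaY (α : ℝ) (v : ℝ × ℝ) (p : ℝ × ℝ × ℝ) :
    v.1 • zetaX α p + v.2 • zetaY α p =
      (v.1, v.2, -α * angularForm (p.1, p.2.1) v * p.2.2) := by
  ext <;> simp only [zetaX, zetaY, angularForm, Prod.smul_mk, Prod.mk_add_mk, smul_eq_mul] <;> ring

/-- The point over the polar coordinates `(r, φ)` on the integral surface `z = u e^{-αφ}` of the
plane field spanned by `zetaX α` and `zetaY α`. The angle `φ` is a real number, not taken modulo
`2π`, since `z` changes by a factor `e^{-2πα}` over each turn. -/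
def helicoidPoint (α u r φ : ℝ) : ℝ × ℝ × ℝ :=
  (r * cos φ, r * sin φ, u * exp (-α * φ))

theorem helicoidPoint_mem_exSixM (α u : ℝ) {r : ℝ} (hr : r ≠ 0) (φ : ℝ) :
    helicoidPoint α u r φ ∈ exSixM := by
  intro h
  obtain ⟨hcos, hsin⟩ : cos φ = 0 ∧ sin φ = 0 := by
    simpa [helicoidPoint, hr] using h
  simpa [hcos, hsin] using cos_sq_add_sin_sq φ

theorem smul_zetaX_add_smul_zetaY_helicoidPoint (α u : ℝ) {r : ℝ} (hr : r ≠ 0) (φ r' φ' : ℝ) :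
    (r' * cos φ - r * φ' * sin φ) • zetaX α (helicoidPoint α u r φ) +
        (r' * sin φ + r * φ' * cos φ) • zetaY α (helicoidPoint α u r φ) =
      (r' * cos φ - r * φ' * sin φ, r' * sin φ + r * φ' * cos φ,
        -α * φ' * (u * exp (-α * φ))) := by
  have h := smul_zetaX_add_smul_zetaY α
    (r' * cos φ - r * φ' * sin φ, r' * sin φ + r * φ' * cos φ) (helicoidPoint α u r φ)
  simpa only [helicoidPoint, angularForm_polar hr] using h

theorem hasDerivAt_helicoidPoint (α u : ℝ) {r φ : ℝ → ℝ} {r' φ' t : ℝ}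
    (hr : HasDerivAt r r' t) (hφ : HasDerivAt φ φ' t) :
    HasDerivAt (fun s => helicoidPoint α u (r s) (φ s))
      (r' * cos (φ t) - r t * φ' * sin (φ t), r' * sin (φ t) + r t * φ' * cos (φ t),
        -α * φ' * (u * exp (-α * φ t))) t := by
  refine (hr.mul hφ.cos).prodMk
    ((hr.mul hφ.sin).prodMk ((hφ.const_mul (-α)).exp.const_mul u)) |>.congr_deriv ?_
  ext <;> ring

theorem helicoidal_curve_is_lift_general (α u : ℝ) {r φ : ℝ → ℝ} {r' φ' t : ℝ}
    (hr : HasDerivAt r r' t) (hφ : HasDerivAt φ φ' t) (hr_ne : r t ≠ 0) :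
    helicoidPoint α u (r t) (φ t) ∈ exSixM ∧
      HasDerivAt (fun s => helicoidPoint α u (r s) (φ s))
        ((r' * cos (φ t) - r t * φ' * sin (φ t)) • zetaX α (helicoidPoint α u (r t) (φ t)) +
          (r' * sin (φ t) + r t * φ' * cos (φ t)) • zetaY α (helicoidPoint α u (r t) (φ t))) t := by
  rw [smul_zetaX_add_smul_zetaY_helicoidPoint α u hr_ne]
  exact ⟨helicoidPoint_mem_exSixM α u hr_ne (φ t), hasDerivAt_helicoidPoint α u hr hφ⟩

theorem helicoidal_curve_is_lift (α : ℝ) (hα : 0 < α) (u : ℝ)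
    (γ : ℝ → ℝ × ℝ × ℝ)
    (hγ : γ = fun θ => (Real.cos θ, Real.sin θ, u * Real.exp (-α * θ))) :
    ∀ θ : ℝ, γ θ ∈ exSixM ∧
      HasDerivAt γ
        ((-Real.sin θ) • zetaX α (γ θ) + (Real.cos θ) • zetaY α (γ θ)) θ := by
  subst hγ
  intro θ
  simpa [helicoidPoint] using
    helicoidal_curve_is_lift_general α u (hasDerivAt_const θ 1) (hasDerivAt_id θ) one_ne_zero
end
end

section
/- Orbit closures in Example 6: fix α > 0 and C ≠ 0, and let S_C = {(r cos θ, r sin θ, C e^{−αθ}) : r > 0, θ ∈ ℝ} ⊆ ℝ³. Then the closure of S_C inside M = ℝ³ ∖ {(0,0,z) : z ∈ ℝ} equals S_C ∪ {(x, y, 0) : (x,y) ≠ (0,0)}; in particular S_C is not closed in M. -/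
noncomputable section

/-- The helicoidal orbit `S_C`. -/
def helicoid (α C : ℝ) : Set (ℝ × ℝ × ℝ) :=
  {p | ∃ r > (0 : ℝ), ∃ θ : ℝ, p = (r * Real.cos θ, r * Real.sin θ, C * Real.exp (-α * θ))}

/-!
The orbit `S_C` is a parametrized surface, and both parameters can be read off from a point:
`r = √(x² + y²)` and `θ = -log (z / C) / α`. Hence `S_C` consists of fixed points of a map which is
continuous wherever `z ≠ 0`, so a limit of points of `S_C` that lies in `M` and has `z ≠ 0` is again
in `S_C`. In the plane `z = 0`, a point with polar coordinates `(r, θ)` is the limit of the points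
of `S_C` on the same vertical line with angles `θ + 2πk`, as `αk → ∞`.
-/

open Filter Topology

theorem eq_of_mem_closure_of_continuousAt {X Y : Type*} [TopologicalSpace X] [TopologicalSpace Y]
    [T2Space Y] {f g : X → Y} {s : Set X} {x : X} (hx : x ∈ closure s) (hf : ContinuousAt f x)
    (hg : ContinuousAt g x) (hfg : Set.EqOn f g s) : f x = g x :=
  tendsto_nhds_unique_of_frequently_eq hf hg ((mem_closure_iff_frequently.1 hx).mono hfg)

theorem sqrt_sq_add_sq_pos_iff {x y : ℝ} : 0 < √(x ^ 2 + y ^ 2) ↔ (x, y) ≠ (0, 0) := by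
  have hnonneg : 0 ≤ x ^ 2 + y ^ 2 := by positivity
  rw [Real.sqrt_pos, hnonneg.lt_iff_ne', Ne, Ne, Prod.mk.injEq,
    add_eq_zero_iff_of_nonneg (sq_nonneg x) (sq_nonneg y), sq_eq_zero_iff, sq_eq_zero_iff]

theorem sqrt_sq_mul_cos_add_sq_mul_sin {r : ℝ} (hr : 0 ≤ r) (θ : ℝ) :
    √((r * Real.cos θ) ^ 2 + (r * Real.sin θ) ^ 2) = r := by
  rw [mul_pow, mul_pow, ← mul_add, Real.cos_sq_add_sin_sq, mul_one, Real.sqrt_sq hr]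

theorem exists_pos_mul_cos_mul_sin_eq {x y : ℝ} (hxy : (x, y) ≠ (0, 0)) :
    ∃ r > 0, ∃ θ, r * Real.cos θ = x ∧ r * Real.sin θ = y := by
  have hw : (⟨x, y⟩ : ℂ) ≠ 0 := by simpa [Complex.ext_iff] using hxy
  exact ⟨_, norm_pos_iff.2 hw, _, Complex.norm_mul_cos_arg _, Complex.norm_mul_sin_arg _⟩

theorem helicoid_subset_exSixM (α C : ℝ) : helicoid α C ⊆ exSixM := by
  rintro _ ⟨r, hr, θ, rfl⟩
  refine sqrt_sq_add_sq_pos_iff.1 ?_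
  rwa [sqrt_sq_mul_cos_add_sq_mul_sin hr.le]

theorem height_ne_zero_of_mem_helicoid {α C : ℝ} (hC : C ≠ 0) {p : ℝ × ℝ × ℝ}
    (hp : p ∈ helicoid α C) : p.2.2 ≠ 0 := by
  obtain ⟨r, -, θ, rfl⟩ := hp
  exact mul_ne_zero hC (Real.exp_ne_zero _)

/-- The parametrization `(r, θ) ↦ (r cos θ, r sin θ, C e^{-αθ})` of the helicoid, on all of `ℝ²`;
the helicoid itself is the image of the half-plane `r > 0`. -/
def helicoidParam (α C : ℝ) (q : ℝ × ℝ) : ℝ × ℝ × ℝ :=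
  (q.1 * Real.cos q.2, q.1 * Real.sin q.2, C * Real.exp (-α * q.2))

/-- The radius and angle `(r, θ)` of a point of the helicoid, the angle being recovered from the
height; a left inverse of `helicoidParam` on `r ≥ 0`. Off the half-space `z / C > 0` the angle is a
junk value. -/
def helicoidCoord (α C : ℝ) (p : ℝ × ℝ × ℝ) : ℝ × ℝ :=
  (√(p.1 ^ 2 + p.2.1 ^ 2), -Real.log (p.2.2 / C) / α)

theorem helicoidCoord_helicoidParam {α C : ℝ} (hα : α ≠ 0) (hC : C ≠ 0) {r : ℝ} (hr : 0 ≤ r)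
    (θ : ℝ) : helicoidCoord α C (helicoidParam α C (r, θ)) = (r, θ) := by
  refine Prod.ext (sqrt_sq_mul_cos_add_sq_mul_sin hr θ) ?_
  change -Real.log (C * Real.exp (-α * θ) / C) / α = θ
  rw [mul_div_cancel_left₀ _ hC, Real.log_exp, neg_mul, neg_neg, mul_div_cancel_left₀ _ hα]

theorem helicoidParam_helicoidCoord {α C : ℝ} (hα : α ≠ 0) (hC : C ≠ 0) {p : ℝ × ℝ × ℝ}
    (hp : p ∈ helicoid α C) : helicoidParam α C (helicoidCoord α C p) = p := by
  obtain ⟨r, hr, θ, rfl⟩ := hp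
  exact congrArg (helicoidParam α C) (helicoidCoord_helicoidParam hα hC hr.le θ)

theorem continuous_helicoidParam (α C : ℝ) : Continuous (helicoidParam α C) := by
  unfold helicoidParam
  fun_prop

theorem continuousAt_helicoidCoord (α : ℝ) {C : ℝ} (hC : C ≠ 0) {p : ℝ × ℝ × ℝ}
    (hp : p.2.2 ≠ 0) : ContinuousAt (helicoidCoord α C) p := by
  have hpC : p.2.2 / C ≠ 0 := div_ne_zero hp hC
  unfold helicoidCoord
  fun_prop (disch := assumption)

theorem mem_helicoid_of_mem_closure {α C : ℝ} (hα : α ≠ 0) (hC : C ≠ 0) {p : ℝ × ℝ × ℝ}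
    (hp : p ∈ closure (helicoid α C)) (hpM : p ∈ exSixM) (hz : p.2.2 ≠ 0) :
    p ∈ helicoid α C := by
  have hfix : helicoidParam α C (helicoidCoord α C p) = p :=
    eq_of_mem_closure_of_continuousAt hp
      ((continuous_helicoidParam α C).continuousAt.comp (continuousAt_helicoidCoord α hC hz))
      continuousAt_id fun _ hq ↦ helicoidParam_helicoidCoord hα hC hq
  exact ⟨_, sqrt_sq_add_sq_pos_iff.2 hpM, _, hfix.symm⟩

/-- The sign of `α` makes the turns go in the direction in which the staircase approaches
`z = 0`. -/
theorem tendsto_exp_neg_mul_add_turns {α : ℝ} (hα : α ≠ 0) (θ : ℝ) :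
    Tendsto (fun n : ℕ ↦ Real.exp (-α * (θ + (SignType.sign α * n : ℤ) * (2 * Real.pi))))
      atTop (𝓝 0) := by
  have hexponent : ∀ n : ℕ, -α * (θ + (SignType.sign α * n : ℤ) * (2 * Real.pi)) =
      -α * θ + -(|α| * (2 * Real.pi)) * n := fun n ↦ by
    rw [← self_mul_sign α]
    push_cast
    ring
  have hslope : -(|α| * (2 * Real.pi)) < 0 :=
    neg_neg_of_pos (mul_pos (abs_pos.2 hα) Real.two_pi_pos)
  simp only [hexponent]
  exact Real.tendsto_exp_atBot.comp <| tendsto_atBot_add_const_left _ _ <|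
    tendsto_natCast_atTop_atTop.const_mul_atTop_of_neg hslope

theorem mem_closure_helicoid_of_height_eq_zero {α : ℝ} (hα : α ≠ 0) (C : ℝ) {p : ℝ × ℝ × ℝ}
    (hpM : p ∈ exSixM) (hz : p.2.2 = 0) : p ∈ closure (helicoid α C) := by
  obtain ⟨x, y, z⟩ := p
  obtain rfl : z = 0 := hz
  obtain ⟨r, hr, θ, rfl, rfl⟩ := exists_pos_mul_cos_mul_sin_eq hpM
  have hheight := (tendsto_exp_neg_mul_add_turns hα θ).const_mul C
  rw [mul_zero] at hheight
  refine mem_closure_of_tendsto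
    (tendsto_const_nhds.prodMk_nhds (tendsto_const_nhds.prodMk_nhds hheight))
    (.of_forall fun n ↦ ⟨r, hr, θ + (SignType.sign α * n : ℤ) * (2 * Real.pi), ?_⟩)
  rw [Real.cos_add_int_mul_two_pi, Real.sin_add_int_mul_two_pi]

theorem closure_helicoid_inter_exSixM {α C : ℝ} (hα : α ≠ 0) (hC : C ≠ 0) :
    closure (helicoid α C) ∩ exSixM =
      helicoid α C ∪ {p : ℝ × ℝ × ℝ | (p.1, p.2.1) ≠ (0, 0) ∧ p.2.2 = 0} := by
  ext p
  constructor
  · rintro ⟨hp, hpM⟩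
    by_cases hz : p.2.2 = 0
    · exact .inr ⟨hpM, hz⟩
    · exact .inl (mem_helicoid_of_mem_closure hα hC hp hpM hz)
  · rintro (hp | ⟨hpM, hz⟩)
    · exact ⟨subset_closure hp, helicoid_subset_exSixM α C hp⟩
    · exact ⟨mem_closure_helicoid_of_height_eq_zero hα C hpM hz, hpM⟩

theorem helicoid_closure_in_M_general {α C : ℝ} (hα : α ≠ 0) (hC : C ≠ 0) :
    closure (helicoid α C) ∩ exSixM
        = helicoid α C ∪ {p : ℝ × ℝ × ℝ | (p.1, p.2.1) ≠ (0, 0) ∧ p.2.2 = 0} ∧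
      closure (helicoid α C) ∩ exSixM ≠ helicoid α C := by
  refine ⟨closure_helicoid_inter_exSixM hα hC, fun heq ↦ ?_⟩
  have hM : ((1, 0, 0) : ℝ × ℝ × ℝ) ∈ exSixM := by simp [exSixM]
  have hmem : ((1, 0, 0) : ℝ × ℝ × ℝ) ∈ helicoid α C :=
    heq.subset ⟨mem_closure_helicoid_of_height_eq_zero hα C hM rfl, hM⟩
  exact height_ne_zero_of_mem_helicoid hC hmem rfl

theorem helicoid_closure_in_M (α : ℝ) (hα : 0 < α) (C : ℝ) (hC : C ≠ 0) :
    closure (helicoid α C) ∩ exSixM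
        = helicoid α C ∪ {p : ℝ × ℝ × ℝ | (p.1, p.2.1) ≠ (0, 0) ∧ p.2.2 = 0} ∧
      closure (helicoid α C) ∩ exSixM ≠ helicoid α C :=
  helicoid_closure_in_M_general hα.ne' hC
end
end

section
/- Distinctness of helicoidal orbits: fix α > 0 and let S_C = {(r cos θ, r sin θ, C e^{−αθ}) : r > 0, θ ∈ ℝ} ⊆ ℝ³ for C ≠ 0. For nonzero reals C and C', the sets S_C and S_{C'} are equal if and only if C' = C · e^{2πα n} for some integer n; otherwise they are disjoint. -/
noncomputable section

/-!
STATEMENT 13: distinctness of helicoidal orbits.  For `α > 0` and nonzero `C, C'`,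
`S_C = S_{C'}` iff `C' = C e^{2παn}` for some `n : ℤ`; otherwise they are disjoint.
-/

open Real

/-!
A point off the `z`-axis determines its polar angle up to `2πn`, and changing `θ` by `2πn` rescales
the height `C e^{-αθ}` by a power of `e^{2πα}`. So the ambiguity in the angle is exactly the
ambiguity in `C`, and two helicoids sharing a single point coincide.
-/

theorem polar_eq_polar_iff {r s : ℝ} (hr : 0 < r) (hs : 0 < s) {θ φ : ℝ} :
    (r * cos θ = s * cos φ ∧ r * sin θ = s * sin φ) ↔ r = s ∧ (θ : Real.Angle) = φ := by
  constructor
  · rintro ⟨hcos, hsin⟩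
    have hsq : r ^ 2 = s ^ 2 := by
      calc r ^ 2 = (r * cos θ) ^ 2 + (r * sin θ) ^ 2 := by
            linear_combination -r ^ 2 * sin_sq_add_cos_sq θ
        _ = (s * cos φ) ^ 2 + (s * sin φ) ^ 2 := by rw [hcos, hsin]
        _ = s ^ 2 := by linear_combination s ^ 2 * sin_sq_add_cos_sq φ
    obtain rfl : r = s := (pow_left_inj₀ hr.le hs.le two_ne_zero).1 hsq
    exact ⟨rfl, Real.Angle.cos_sin_inj (mul_left_cancel₀ hr.ne' hcos)
      (mul_left_cancel₀ hr.ne' hsin)⟩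
  · rintro ⟨rfl, hangle⟩
    rw [← Real.Angle.cos_coe θ, ← Real.Angle.sin_coe θ, hangle, Real.Angle.cos_coe,
      Real.Angle.sin_coe]
    exact ⟨rfl, rfl⟩

theorem helicoid_nonempty (α C : ℝ) : (helicoid α C).Nonempty :=
  ⟨_, 1, one_pos, 0, rfl⟩

theorem helicoid_mul_exp (α C : ℝ) (n : ℤ) :
    helicoid α (C * exp (2 * π * α * n)) = helicoid α C := by
  ext p
  refine exists_congr fun r => and_congr_right fun _ =>
    (Equiv.subRight (n * (2 * π))).exists_congr fun θ => ?_
  have hheight : C * exp (2 * π * α * n) * exp (-α * θ) = C * exp (-α * (θ - n * (2 * π))) := by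
    rw [mul_assoc, ← exp_add]
    ring_nf
  rw [Equiv.subRight_apply, cos_sub_int_mul_two_pi, sin_sub_int_mul_two_pi, hheight]

theorem exists_eq_mul_exp_of_mem_helicoid {α C C' : ℝ} {p : ℝ × ℝ × ℝ}
    (hp : p ∈ helicoid α C) (hp' : p ∈ helicoid α C') :
    ∃ n : ℤ, C' = C * exp (2 * π * α * n) := by
  obtain ⟨r, hr, θ, rfl⟩ := hp
  obtain ⟨s, hs, φ, heq⟩ := hp'
  obtain ⟨hcos, hsin, hheight⟩ : r * cos θ = s * cos φ ∧ r * sin θ = s * sin φ ∧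
      C * exp (-α * θ) = C' * exp (-α * φ) := by
    simpa only [Prod.mk.injEq] using heq
  obtain ⟨n, hn⟩ : ∃ n : ℤ, φ - θ = 2 * π * n :=
    Real.Angle.angle_eq_iff_two_pi_dvd_sub.1 ((polar_eq_polar_iff hr hs).1 ⟨hcos, hsin⟩).2.symm
  refine ⟨n, mul_right_cancel₀ (exp_ne_zero (-α * φ)) ?_⟩
  calc C' * exp (-α * φ) = C * exp (-α * θ) := hheight.symm
    _ = C * exp (2 * π * α * n + -α * φ) := by
      congr 2
      linear_combination α * hn
    _ = C * exp (2 * π * α * n) * exp (-α * φ) := by rw [exp_add, ← mul_assoc C]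

theorem helicoid_eq_iff_general (α C C' : ℝ) :
    (helicoid α C = helicoid α C' ↔ ∃ n : ℤ, C' = C * exp (2 * π * α * n)) ∧
      ((¬ ∃ n : ℤ, C' = C * exp (2 * π * α * n)) →
        Disjoint (helicoid α C) (helicoid α C')) := by
  refine ⟨⟨fun heq => ?_, ?_⟩, fun hne => ?_⟩
  · obtain ⟨p, hp⟩ := helicoid_nonempty α C
    exact exists_eq_mul_exp_of_mem_helicoid hp (heq ▸ hp)
  · rintro ⟨n, rfl⟩
    exact (helicoid_mul_exp α C n).symm
  · exact Set.disjoint_left.2 fun _ hp hp' => hne (exists_eq_mul_exp_of_mem_helicoid hp hp')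

theorem helicoid_eq_iff (α : ℝ) (hα : 0 < α) (C C' : ℝ) (hC : C ≠ 0) (hC' : C' ≠ 0) :
    (helicoid α C = helicoid α C' ↔ ∃ n : ℤ, C' = C * Real.exp (2 * π * α * n)) ∧
      ((¬ ∃ n : ℤ, C' = C * Real.exp (2 * π * α * n)) →
        Disjoint (helicoid α C) (helicoid α C')) :=
  helicoid_eq_iff_general α C C'
end
end

section
/- Tangency of the generating vector fields to the orbits: fix α > 0, C ≠ 0, and let Φ(r, θ) = (r cos θ, r sin θ, C e^{−αθ}). Then for every (r, θ) ∈ (0,∞) × ℝ, both vectors ζ_X^α(Φ(r,θ)) and ζ_Y^α(Φ(r,θ)) lie in the image of the differential dΦ_{(r,θ)} : ℝ² → ℝ³. -/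
noncomputable section

/-!
In polar coordinates `∂/∂x = cos θ ∂_r - (sin θ / r) ∂_θ` and `∂/∂y = sin θ ∂_r + (cos θ / r) ∂_θ`.
Hence on the surface `(r cos θ, r sin θ, h θ)` the tangent vector over `(a, b)` has height
`h' θ * (b cos θ - a sin θ) / r`, and the generating fields have exactly this height, over `(1, 0)`
and `(0, 1)`, when `h' = -α h`.
-/

section RightConoid

open Real

/-- The parametrization of the right conoid ruled by horizontal lines through the `z`-axis, the line
in direction `θ` lying at height `h θ`. The helicoidal orbit `S_C` is the case
`h θ = C * exp (-α * θ)`. -/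
def rightConoid (h : ℝ → ℝ) : ℝ × ℝ → ℝ × ℝ × ℝ :=
  fun p => (p.1 * cos p.2, p.1 * sin p.2, h p.2)

variable {h : ℝ → ℝ} {h' r θ : ℝ}

theorem fderiv_rightConoid_apply (hh : HasDerivAt h h' θ) (u v : ℝ) :
    fderiv ℝ (rightConoid h) (r, θ) (u, v) =
      (u * cos θ - r * sin θ * v, u * sin θ + r * cos θ * v, h' * v) := by
  have hfst : HasFDerivAt Prod.fst (.fst ℝ ℝ ℝ) (r, θ) := hasFDerivAt_fst
  have hsnd : HasFDerivAt Prod.snd (.snd ℝ ℝ ℝ) (r, θ) := hasFDerivAt_snd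
  have hconoid := (hfst.mul hsnd.cos).prodMk
    ((hfst.mul hsnd.sin).prodMk (hh.comp_hasFDerivAt _ hsnd))
  have happly := congrArg (fun L => L (u, v)) hconoid.fderiv
  refine happly.trans ?_
  simp only [ContinuousLinearMap.prod_apply, add_apply, smul_apply, ContinuousLinearMap.coe_fst',
    ContinuousLinearMap.coe_snd', smul_eq_mul]
  ext <;> ring

theorem fderiv_rightConoid_cartesian (hr : r ≠ 0) (hh : HasDerivAt h h' θ) (a b : ℝ) :
    fderiv ℝ (rightConoid h) (r, θ) (a * cos θ + b * sin θ, (b * cos θ - a * sin θ) / r) =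
      (a, b, h' * ((b * cos θ - a * sin θ) / r)) := by
  rw [fderiv_rightConoid_apply hh]
  ext
  · field_simp
    linear_combination a * sin_sq_add_cos_sq θ
  · field_simp
    linear_combination b * sin_sq_add_cos_sq θ
  · rfl

-- On the axis `r = 0` both heights are the junk value `x / 0 = 0`; likewise for `zetaY`.
theorem zetaX_rightConoid (α : ℝ) :
    zetaX α (rightConoid h (r, θ)) = (1, 0, α * h θ * (sin θ / r)) := by
  simp only [zetaX, rightConoid, mul_pow, ← mul_add, cos_sq_add_sin_sq]
  field_simp

theorem zetaY_rightConoid (α : ℝ) :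
    zetaY α (rightConoid h (r, θ)) = (0, 1, -(α * h θ * (cos θ / r))) := by
  simp only [zetaY, rightConoid, mul_pow, ← mul_add, cos_sq_add_sin_sq]
  field_simp

theorem hasDerivAt_const_mul_exp_mul (C k t : ℝ) :
    HasDerivAt (fun s => C * exp (k * s)) (k * (C * exp (k * t))) t := by
  have hexp := (((hasDerivAt_id t).const_mul k).exp).const_mul C
  exact hexp.congr_deriv (by simp only [id]; ring)

theorem generating_fields_tangent_to_helicoid_general (α : ℝ) (hr : r ≠ 0)
    (hh : HasDerivAt h (-α * h θ) θ) :
    zetaX α (rightConoid h (r, θ)) ∈ Set.range (fderiv ℝ (rightConoid h) (r, θ)) ∧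
      zetaY α (rightConoid h (r, θ)) ∈ Set.range (fderiv ℝ (rightConoid h) (r, θ)) := by
  rw [zetaX_rightConoid, zetaY_rightConoid]
  refine ⟨⟨_, (fderiv_rightConoid_cartesian hr hh 1 0).trans ?_⟩,
    ⟨_, (fderiv_rightConoid_cartesian hr hh 0 1).trans ?_⟩⟩ <;>
  ring_nf

end RightConoid

theorem generating_fields_tangent_to_helicoid (α : ℝ) (hα : 0 < α)
    (C : ℝ) (hC : C ≠ 0) (Φ : ℝ × ℝ → ℝ × ℝ × ℝ)
    (hΦ : Φ = fun p => (p.1 * Real.cos p.2, p.1 * Real.sin p.2, C * Real.exp (-α * p.2))) :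
    ∀ r θ : ℝ, 0 < r →
      zetaX α (Φ (r, θ)) ∈ Set.range (fderiv ℝ Φ (r, θ)) ∧
      zetaY α (Φ (r, θ)) ∈ Set.range (fderiv ℝ Φ (r, θ)) := by
  subst hΦ
  exact fun r θ hr => generating_fields_tangent_to_helicoid_general α hr.ne'
    (hasDerivAt_const_mul_exp_mul C (-α) θ)
end
end

section
/- Incompleteness of the 𝔤-action in Example 6: for α > 0 the vector field ζ_X^α on M = ℝ³ ∖ {(0,0,z) : z ∈ ℝ} is not complete. Precisely, there is no differentiable curve γ : ℝ → ℝ³ with γ(t) ∈ M for all t, γ(0) = (−1, 0, 1), and γ'(t) = ζ_X^α(γ(t)) for all t ∈ ℝ; the maximal integral curve through (−1,0,1) is t ↦ (t−1, 0, 1), defined only for t < 1. -/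
noncomputable section

/-!
The coordinate `y` is constant along every integral curve, so a curve meeting the plane `y = 0`
stays in it. There the field is the constant `(1, 0, 0)`, hence the curve is a straight line
parallel to the `x`-axis, traversed at unit speed, and it runs into the `z`-axis in finite time.
-/

open Set

theorem eq_add_smul_of_hasDerivWithinAt_const {𝕜 E : Type*} [RCLike 𝕜] [NormedAddCommGroup E]
    [NormedSpace 𝕜 E] {f : 𝕜 → E} {v : E} {s : Set 𝕜} (hs : Convex ℝ s)
    (hf : ∀ t ∈ s, HasDerivWithinAt f v s t) {t₀ t : 𝕜} (ht₀ : t₀ ∈ s) (ht : t ∈ s) :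
    f t = f t₀ + (t - t₀) • v := by
  have hderiv : ∀ t ∈ s, HasDerivWithinAt (fun t ↦ f t - t • v) 0 s t := fun t ht ↦ by
    simpa using (hf t ht).fun_sub ((hasDerivWithinAt_id t s).smul_const v)
  have hbound := hs.norm_image_sub_le_of_norm_hasDerivWithin_le (C := 0) hderiv (by simp) ht₀ ht
  have hconst : f t - t • v = f t₀ - t₀ • v := by
    simpa only [zero_mul, norm_le_zero_iff, sub_eq_zero] using hbound
  rw [sub_smul, sub_eq_iff_eq_add.mp hconst]
  abel

section

variable {α a c t₀ : ℝ} {γ : ℝ → ℝ × ℝ × ℝ} {I : Set ℝ}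

theorem mk_zero_mem_exSixM_iff {x z : ℝ} : (x, 0, z) ∈ exSixM ↔ x ≠ 0 := by
  simp [exSixM]

-- On the `z`-axis itself this holds only because `0 / 0 = 0`.
theorem zetaX_of_y_eq_zero {p : ℝ × ℝ × ℝ} (hp : p.2.1 = 0) : zetaX α p = (1, 0, 0) := by
  simp [zetaX, hp]

theorem hasDerivAt_line_zetaX (α a c t : ℝ) :
    HasDerivAt (fun s : ℝ ↦ ((s - a, 0, c) : ℝ × ℝ × ℝ)) (zetaX α (t - a, 0, c)) t := by
  rw [zetaX_of_y_eq_zero rfl]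
  exact ((hasDerivAt_id t).sub_const a).prodMk (hasDerivAt_const t (0, c))

theorem y_eq_of_isIntegralCurveOn_zetaX (hI : Convex ℝ I)
    (hγ : IsIntegralCurveOn γ (fun _ ↦ zetaX α) I) {t : ℝ} (ht₀ : t₀ ∈ I) (ht : t ∈ I) :
    (γ t).2.1 = (γ t₀).2.1 := by
  have hderiv : ∀ t ∈ I, HasDerivWithinAt (fun s ↦ (γ s).2.1) 0 I t := fun t ht ↦
    (hγ t ht).hasFDerivWithinAt.snd.fst.hasDerivWithinAt.congr_deriv (by simp [zetaX])
  simpa using eq_add_smul_of_hasDerivWithinAt_const hI hderiv ht₀ ht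

theorem eqOn_line_of_isIntegralCurveOn_zetaX (hI : Convex ℝ I)
    (hγ : IsIntegralCurveOn γ (fun _ ↦ zetaX α) I) (ht₀ : t₀ ∈ I)
    (hinit : γ t₀ = (t₀ - a, 0, c)) : EqOn γ (fun t ↦ (t - a, 0, c)) I := by
  have hderiv : ∀ t ∈ I, HasDerivWithinAt γ (1, 0, 0) I t := fun t ht ↦ by
    have hy : (γ t).2.1 = 0 := by rw [y_eq_of_isIntegralCurveOn_zetaX hI hγ ht₀ ht, hinit]
    exact zetaX_of_y_eq_zero (α := α) hy ▸ hγ t ht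
  intro t ht
  simp [eq_add_smul_of_hasDerivWithinAt_const hI hderiv ht₀ ht, hinit]

theorem notMem_of_isIntegralCurveOn_zetaX (hI : Convex ℝ I)
    (hγ : IsIntegralCurveOn γ (fun _ ↦ zetaX α) I) (hM : MapsTo γ I exSixM) (ht₀ : t₀ ∈ I)
    (hinit : γ t₀ = (t₀ - a, 0, c)) : a ∉ I := fun ha ↦ by
  have hmem := hM ha
  rw [eqOn_line_of_isIntegralCurveOn_zetaX hI hγ ht₀ hinit ha] at hmem
  exact mk_zero_mem_exSixM_iff.mp hmem (sub_self a)

end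

theorem zetaX_not_complete_general (α a c : ℝ) :
    (∀ (γ : ℝ → ℝ × ℝ × ℝ) (I : Set ℝ) (t₀ : ℝ), Convex ℝ I →
        IsIntegralCurveOn γ (fun _ ↦ zetaX α) I → MapsTo γ I exSixM → t₀ ∈ I →
        γ t₀ = (t₀ - a, 0, c) → EqOn γ (fun t ↦ (t - a, 0, c)) I ∧ a ∉ I) ∧
      (∀ t : ℝ, t ≠ a →
        ((t - a, 0, c) : ℝ × ℝ × ℝ) ∈ exSixM ∧
        HasDerivAt (fun s : ℝ ↦ ((s - a, 0, c) : ℝ × ℝ × ℝ)) (zetaX α (t - a, 0, c)) t) ∧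
      ((a - a, 0, c) : ℝ × ℝ × ℝ) ∉ exSixM :=
  ⟨fun _ _ _ hI hγ hM ht₀ hinit ↦
      ⟨eqOn_line_of_isIntegralCurveOn_zetaX hI hγ ht₀ hinit,
        notMem_of_isIntegralCurveOn_zetaX hI hγ hM ht₀ hinit⟩,
    fun t hta ↦
      ⟨mk_zero_mem_exSixM_iff.mpr (sub_ne_zero.mpr hta), hasDerivAt_line_zetaX α a c t⟩,
    fun h ↦ mk_zero_mem_exSixM_iff.mp h (sub_self a)⟩

theorem zetaX_not_complete (α : ℝ) (hα : 0 < α) :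
    (¬ ∃ γ : ℝ → ℝ × ℝ × ℝ, (∀ t : ℝ, γ t ∈ exSixM) ∧
        γ 0 = (-1, 0, 1) ∧ ∀ t : ℝ, HasDerivAt γ (zetaX α (γ t)) t) ∧
      (∀ t : ℝ, t < 1 →
        ((t - 1, 0, 1) : ℝ × ℝ × ℝ) ∈ exSixM ∧
        HasDerivAt (fun s : ℝ => ((s - 1, 0, 1) : ℝ × ℝ × ℝ))
          (zetaX α (t - 1, 0, 1)) t) ∧
      ((fun s : ℝ => ((s - 1, 0, 1) : ℝ × ℝ × ℝ)) 0 = (-1, 0, 1)) ∧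
      ((1 - 1, 0, 1) : ℝ × ℝ × ℝ) ∉ exSixM := by
  obtain ⟨hmax, hline, hexit⟩ := zetaX_not_complete_general α 1 1
  exact ⟨fun ⟨γ, hM, h0, hγ⟩ ↦ (hmax γ univ 0 convex_univ (isIntegralCurveOn_univ.mpr hγ)
    (fun t _ ↦ hM t) (mem_univ 0) (by simpa using h0)).2 (mem_univ 1),
    fun t ht ↦ hline t ht.ne, by simp, hexit⟩
end
end
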